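/- In the flat para-Hermitian model V = ℝⁿ × ℝⁿ with an everywhere differentiable B-field B : V → L(ℝⁿ, ℝⁿ) (each B_q skew for the dot product), the following are equivalent: (i) the deformed distribution T₊ᴮ is involutive under the flat D-bracket, i.e. for all vector fields X, Y differentiable at p and all p ∈ V, ⟦P₊ᴮX, P₊ᴮY⟧ᴰ(p) ∈ T₊ᴮ(p); (ii) for every p ∈ V and all x, y, z ∈ ℝⁿ, the cyclic sum (∂_{(x, B_p x)} b)(y, z) + (∂_{(y, B_p y)} b)(z, x) + (∂_{(z, B_p z)} b)(x, y) = 0, where (∂_h b)(u, w) is the Fréchet derivative at p in direction h of q ↦ B_q u · w. (This is the Maurer–Cartan type condition d₊b + (Λ³η)[b, b]₋ = 0 for compatibility of K_B with K.) -/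

import Mathlib

/-- Dot product on `ℝⁿ`. -/
def flatDot (n : ℕ) (u v : Fin n → ℝ) : ℝ := ∑ i, u i * v i

/-- The split-signature metric `η((x, x̃), (y, ỹ)) = x̃·y + x·ỹ` of the flat
para-Hermitian model `V = ℝⁿ × ℝⁿ`. -/
def flatEta (n : ℕ) (w w' : (Fin n → ℝ) × (Fin n → ℝ)) : ℝ :=
  flatDot n w.2 w'.1 + flatDot n w.1 w'.2

/-!
The graph of a skew map `A : E → F` is its own orthogonal for the split metric, so `ξ` lies on the
graph of `B p` if and only if `η(ξ, (z, B_p z)) = 0` for all `z`. If `ξ` is the D-bracket of two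
graph-valued fields, the derivatives of their `E`-components drop out of `η(ξ, (z, B_p z))` because
the graph is isotropic. Only derivatives of `B` remain, and they form the cyclic sum evaluated on
`z` and the `E`-components of the fields at `p`, which are arbitrary, as constant fields show.
-/

section SplitMetric

variable {R E F : Type*} [CommRing R] [AddCommGroup E] [Module R E] [AddCommGroup F] [Module R F]

/-- The split metric `η((x, x̃), (y, ỹ)) = ⟨x̃, y⟩ + ⟨ỹ, x⟩` on `E × F` induced by a pairing `g` of
`F` with `E`. The pairing takes its `F`-argument first, so that `g (A u) v` is the bilinear form on
`E` attached to a map `A : E → F`. -/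
def splitMetric (g : F →ₗ[R] E →ₗ[R] R) : LinearMap.BilinForm R (E × F) :=
  g.compl₁₂ (.snd R E F) (.fst R E F) + (g.compl₁₂ (.snd R E F) (.fst R E F)).flip

/-- Skewness of a map `A : E → F` with respect to a pairing of `F` with `E`; this is the pointwise
condition on a B-field. It is stated for bare functions so that it applies to linear and continuous
linear maps alike. -/
def IsSkewFor (g : F →ₗ[R] E →ₗ[R] R) (A : E → F) : Prop :=
  ∀ u v, g (A u) v = -g (A v) u

variable (g : F →ₗ[R] E →ₗ[R] R)

lemma splitMetric_apply (w w' : E × F) : splitMetric g w w' = g w.2 w'.1 + g w'.2 w.1 :=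
  rfl

lemma isSymm_splitMetric : (splitMetric g).IsSymm :=
  ⟨fun _ _ => add_comm _ _⟩

lemma IsSkewFor.splitMetric_graph {g : F →ₗ[R] E →ₗ[R] R} {A : E → F} (hA : IsSkewFor g A)
    (ξ : E × F) (z : E) : splitMetric g ξ (z, A z) = g (ξ.2 - A ξ.1) z := by
  rw [splitMetric_apply, hA z ξ.1, map_sub, LinearMap.sub_apply, sub_eq_add_neg]

end SplitMetric

section Nondegeneracy

lemma isContPerfPair_of_isSymm {R M : Type*} [CommRing R] [TopologicalSpace R]
    [AddCommGroup M] [Module R M] [TopologicalSpace M] {η : LinearMap.BilinForm R M}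
    (hsymm : η.IsSymm) (hcont : Continuous fun w : M × M => η w.1 w.2)
    (hbij : Function.Bijective fun w => ContinuousLinearMap.mk (η w) <|
      hcont.comp (.prodMk_right w)) :
    η.IsContPerfPair := by
  refine ⟨hcont, hbij, ?_⟩
  convert hbij using 2 with w
  exact ContinuousLinearMap.ext fun v => hsymm.eq v w

variable {R E F : Type*} [CommRing R] [TopologicalSpace R] [IsTopologicalRing R]
  [AddCommGroup E] [Module R E] [TopologicalSpace E]
  [AddCommGroup F] [Module R F] [TopologicalSpace F]
  (g : F →ₗ[R] E →ₗ[R] R) [g.IsContPerfPair]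

lemma bijective_splitMetric (h : ∀ w, Continuous (splitMetric g w)) :
    Function.Bijective fun w => (⟨splitMetric g w, h w⟩ : StrongDual R (E × F)) := by
  constructor
  · intro w w' hww'
    have hη (v : E × F) : splitMetric g w v = splitMetric g w' v := DFunLike.congr_fun hww' v
    refine Prod.ext (g.flip.toContPerfPair.injective ?_) (g.toContPerfPair.injective ?_)
    · ext f
      simpa [splitMetric_apply] using hη (0, f)
    · ext u
      simpa [splitMetric_apply] using hη (u, 0)
  · intro L
    refine ⟨(g.flip.toContPerfPair.symm (L ∘L .inr R E F), g.toContPerfPair.symm (L ∘L .inl R E F)),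
      ContinuousLinearMap.ext fun v => ?_⟩
    have hE := DFunLike.congr_fun (g.toContPerfPair.apply_symm_apply (L ∘L .inl R E F)) v.1
    have hF := DFunLike.congr_fun (g.flip.toContPerfPair.apply_symm_apply (L ∘L .inr R E F)) v.2
    exact (congrArg₂ (· + ·) hE hF).trans (L.comp_inl_add_comp_inr v)

instance isContPerfPair_splitMetric : (splitMetric g).IsContPerfPair := by
  have hcont : Continuous fun w : (E × F) × (E × F) => splitMetric g w.1 w.2 := by
    have hg := g.continuous_uncurry_of_isContPerfPair
    exact (hg.comp (by fun_prop : Continuous fun w : (E × F) × (E × F) => (w.1.2, w.2.1))).add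
      (hg.comp (by fun_prop : Continuous fun w : (E × F) × (E × F) => (w.2.2, w.1.1)))
  exact isContPerfPair_of_isSymm (isSymm_splitMetric g) hcont (bijective_splitMetric g _)

variable {g} in
lemma IsSkewFor.snd_eq_apply_fst_iff {A : E → F} (hA : IsSkewFor g A) (ξ : E × F) :
    ξ.2 = A ξ.1 ↔ ∀ z, splitMetric g ξ (z, A z) = 0 := by
  have hnondeg (f : F) : f = 0 ↔ ∀ z, g f z = 0 := by
    rw [← map_eq_zero_iff _ g.toContPerfPair.injective, ContinuousLinearMap.ext_iff]
    rfl
  simp only [hA.splitMetric_graph, ← hnondeg, sub_eq_zero]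

end Nondegeneracy

section Calculus

variable {𝕜 E F W : Type*} [NontriviallyNormedField 𝕜]
  [NormedAddCommGroup E] [NormedSpace 𝕜 E] [NormedAddCommGroup F] [NormedSpace 𝕜 F]
  [NormedAddCommGroup W] [NormedSpace 𝕜 W]

/-- The coefficient `q ↦ b_q(u, v) = ⟨B_q u, v⟩` of the two-form of a B-field. -/
def twoForm (g : F →ₗ[𝕜] E →ₗ[𝕜] 𝕜) (B : W → E →L[𝕜] F) (u v : E) : W → 𝕜 :=
  fun q => g (B q u) v

/-- The deformed projection `P₊ᴮ X`, which replaces the `F`-component of `X` by the one that puts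
it on the graph of the B-field. -/
def deformedProj (B : W → E →L[𝕜] F) (X : W → E × F) : W → E × F :=
  fun q => ((X q).1, B q (X q).1)

variable {B : W → E →L[𝕜] F} {p : W}

lemma fderiv_twoForm_apply (g : F →ₗ[𝕜] E →ₗ[𝕜] 𝕜) [g.IsContPerfPair]
    (hB : DifferentiableAt 𝕜 B p) (u v : E) (h : W) :
    fderiv 𝕜 (twoForm g B u v) p h = g (fderiv 𝕜 B p h u) v := by
  have hBu := hB.hasFDerivAt.clm_apply (hasFDerivAt_const u p)
  have hb : HasFDerivAt (twoForm g B u v) _ p :=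
    (g.flip.toContPerfPair v).hasFDerivAt.comp p hBu
  simp [hb.fderiv]

lemma isSkewFor_fderiv {g : F →ₗ[𝕜] E →ₗ[𝕜] 𝕜} [g.IsContPerfPair]
    (hBskew : ∀ q, IsSkewFor g (B q)) (hB : DifferentiableAt 𝕜 B p) (h : W) :
    IsSkewFor g (fderiv 𝕜 B p h) := by
  intro u v
  have hb : twoForm g B u v = -twoForm g B v u := funext fun q => hBskew q u v
  rw [← fderiv_twoForm_apply g hB, hb, fderiv_neg, neg_apply, fderiv_twoForm_apply g hB]

lemma fderiv_deformedProj_snd_sub {X : W → E × F} (hB : DifferentiableAt 𝕜 B p)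
    (hX : DifferentiableAt 𝕜 X p) (h : W) :
    (fderiv 𝕜 (deformedProj B X) p h).2 - B p (fderiv 𝕜 (deformedProj B X) p h).1
      = fderiv 𝕜 B p h (X p).1 := by
  have hX₁ := hX.hasFDerivAt.fst
  have hPX : HasFDerivAt (deformedProj B X) _ p := hX₁.prodMk (hB.hasFDerivAt.clm_apply hX₁)
  simp [hPX.fderiv]

end Calculus

section DBracket

variable {𝕜 E F : Type*} [NontriviallyNormedField 𝕜]
  [NormedAddCommGroup E] [NormedSpace 𝕜 E] [NormedAddCommGroup F] [NormedSpace 𝕜 F]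

/-- `ξ` is the value at `p` of the flat D-bracket `⟦U, V⟧ᴰ`. The bracket is encoded by its defining
relation, which determines `ξ` when the pairing `g` is nondegenerate. -/
def IsDBracketAt (g : F →ₗ[𝕜] E →ₗ[𝕜] 𝕜) (U V : E × F → E × F) (p ξ : E × F) : Prop :=
  ∀ w, splitMetric g ξ w
    = splitMetric g (fderiv 𝕜 V p (U p) - fderiv 𝕜 U p (V p)) w
      + splitMetric g (fderiv 𝕜 U p w) (V p)

/-- The Maurer–Cartan three-form `d₊b + (Λ³η)[b, b]₋` of a B-field at `p`, as the cyclic sum of the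
derivatives of its two-form along the graph of `B p`. -/
noncomputable def maurerCartan (g : F →ₗ[𝕜] E →ₗ[𝕜] 𝕜) (B : E × F → E →L[𝕜] F) (p : E × F)
    (x y z : E) : 𝕜 :=
  fderiv 𝕜 (twoForm g B y z) p (x, B p x)
    + fderiv 𝕜 (twoForm g B z x) p (y, B p y)
    + fderiv 𝕜 (twoForm g B x y) p (z, B p z)

variable {g : F →ₗ[𝕜] E →ₗ[𝕜] 𝕜} [g.IsContPerfPair]

variable (g) in
lemma exists_isDBracketAt (U V : E × F → E × F) (p : E × F) : ∃ ξ, IsDBracketAt g U V p ξ := by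
  let η := (splitMetric g).toContPerfPair
  refine ⟨η.symm (η (fderiv 𝕜 V p (U p) - fderiv 𝕜 U p (V p)) + η (V p) ∘L fderiv 𝕜 U p),
    fun w => ?_⟩
  rw [← (isSymm_splitMetric g).eq (V p)]
  exact DFunLike.congr_fun (η.apply_symm_apply _) w

variable {B : E × F → E →L[𝕜] F} {X Y : E × F → E × F} {p ξ : E × F}

lemma IsDBracketAt.splitMetric_graph
    (hξ : IsDBracketAt g (deformedProj B X) (deformedProj B Y) p ξ)
    (hBskew : ∀ q, IsSkewFor g (B q)) (hB : DifferentiableAt 𝕜 B p)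
    (hX : DifferentiableAt 𝕜 X p) (hY : DifferentiableAt 𝕜 Y p) (z : E) :
    splitMetric g ξ (z, B p z) = maurerCartan g B p (X p).1 (Y p).1 z := by
  have hgraph {Z : E × F → E × F} (hZ : DifferentiableAt 𝕜 Z p) (h : E × F) (v : E) :
      splitMetric g (fderiv 𝕜 (deformedProj B Z) p h) (v, B p v)
        = fderiv 𝕜 (twoForm g B (Z p).1 v) p h := by
    rw [(hBskew p).splitMetric_graph, fderiv_deformedProj_snd_sub hB hZ,
      fderiv_twoForm_apply g hB]
  have hskew (h : E × F) : fderiv 𝕜 (twoForm g B z (X p).1) p h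
      = -fderiv 𝕜 (twoForm g B (X p).1 z) p h := by
    simpa only [fderiv_twoForm_apply g hB] using isSkewFor_fderiv hBskew hB h z (X p).1
  have hlast := hgraph hX (z, B p z) (Y p).1
  rw [hξ, map_sub, LinearMap.sub_apply, hgraph hY, hgraph hX, maurerCartan, hskew,
    ← sub_eq_add_neg]
  exact congrArg _ hlast

theorem IsDBracketAt.snd_eq_apply_fst_iff
    (hξ : IsDBracketAt g (deformedProj B X) (deformedProj B Y) p ξ)
    (hBskew : ∀ q, IsSkewFor g (B q)) (hB : DifferentiableAt 𝕜 B p)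
    (hX : DifferentiableAt 𝕜 X p) (hY : DifferentiableAt 𝕜 Y p) :
    ξ.2 = B p ξ.1 ↔ ∀ z, maurerCartan g B p (X p).1 (Y p).1 z = 0 := by
  simp only [(hBskew p).snd_eq_apply_fst_iff, hξ.splitMetric_graph hBskew hB hX hY]

theorem stmt16_general (g : F →ₗ[𝕜] E →ₗ[𝕜] 𝕜) [g.IsContPerfPair] (B : E × F → E →L[𝕜] F)
    (hBskew : ∀ q, IsSkewFor g (B q)) (hB : Differentiable 𝕜 B) :
    (∀ (X Y : E × F → E × F) (p : E × F), DifferentiableAt 𝕜 X p → DifferentiableAt 𝕜 Y p →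
      ∃ ξ, IsDBracketAt g (deformedProj B X) (deformedProj B Y) p ξ ∧ ξ.2 = B p ξ.1)
    ↔ ∀ p x y z, maurerCartan g B p x y z = 0 := by
  constructor
  · intro hinvol p x y
    have hx : DifferentiableAt 𝕜 (fun _ : E × F => (x, (0 : F))) p := differentiableAt_const _
    have hy : DifferentiableAt 𝕜 (fun _ : E × F => (y, (0 : F))) p := differentiableAt_const _
    obtain ⟨ξ, hξ, hmem⟩ := hinvol _ _ p hx hy
    exact (hξ.snd_eq_apply_fst_iff hBskew (hB p) hx hy).1 hmem
  · intro hMC X Y p hX hY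
    obtain ⟨ξ, hξ⟩ := exists_isDBracketAt g (deformedProj B X) (deformedProj B Y) p
    exact ⟨ξ, hξ, (hξ.snd_eq_apply_fst_iff hBskew (hB p) hX hY).2 (hMC p _ _)⟩

end DBracket

section FlatModel

instance isContPerfPair_dotProductBilin {ι : Type*} [Fintype ι] :
    (dotProductBilin ℝ ℝ : (ι → ℝ) →ₗ[ℝ] (ι → ℝ) →ₗ[ℝ] ℝ).IsContPerfPair := by
  classical
  have hbij := LinearMap.toContinuousLinearMap.bijective.comp (dotProductEquiv ℝ ι).bijective
  exact isContPerfPair_of_isSymm ⟨dotProduct_comm⟩ (continuous_fst.dotProduct continuous_snd) hbij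

lemma flatDot_eq_dotProductBilin (n : ℕ) (u v : Fin n → ℝ) :
    flatDot n u v = dotProductBilin ℝ ℝ u v :=
  rfl

lemma flatEta_eq_splitMetric (n : ℕ) (w w' : (Fin n → ℝ) × (Fin n → ℝ)) :
    flatEta n w w' = splitMetric (dotProductBilin ℝ ℝ) w w' :=
  congrArg (flatDot n w.2 w'.1 + ·) (dotProduct_comm w.1 w'.2)

lemma isSkewFor_dotProductBilin {n : ℕ} {A : (Fin n → ℝ) → Fin n → ℝ}
    (hA : ∀ u v, flatDot n (A u) v = -flatDot n u (A v)) : IsSkewFor (dotProductBilin ℝ ℝ) A :=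
  fun u v => (hA u v).trans (congrArg Neg.neg (dotProduct_comm u (A v)))

end FlatModel

/-- Maurer–Cartan condition in the flat para-Hermitian model: the deformed
distribution `T₊ᴮ(p) = {(u, B_p u)}` is involutive under the flat D-bracket if and
only if the cyclic sum `(∂_{(x,B_px)}b)(y,z) + (∂_{(y,B_py)}b)(z,x) + (∂_{(z,B_pz)}b)(x,y)`
vanishes everywhere (`d₊b + (Λ³η)[b, b]₋ = 0`). -/
theorem stmt16 (n : ℕ)
    (B : (Fin n → ℝ) × (Fin n → ℝ) → ((Fin n → ℝ) →L[ℝ] (Fin n → ℝ)))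
    (hBskew : ∀ q u v, flatDot n (B q u) v = - flatDot n u (B q v))
    (hB : Differentiable ℝ B) :
    (∀ (X Y : (Fin n → ℝ) × (Fin n → ℝ) → (Fin n → ℝ) × (Fin n → ℝ))
        (p : (Fin n → ℝ) × (Fin n → ℝ)),
      DifferentiableAt ℝ X p → DifferentiableAt ℝ Y p →
      ∃ ξ : (Fin n → ℝ) × (Fin n → ℝ),
        (∀ w, flatEta n ξ w
          = flatEta n (fderiv ℝ (fun q => ((Y q).1, B q ((Y q).1))) p ((X p).1, B p ((X p).1))
              - fderiv ℝ (fun q => ((X q).1, B q ((X q).1))) p ((Y p).1, B p ((Y p).1))) w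
            + flatEta n (fderiv ℝ (fun q => ((X q).1, B q ((X q).1))) p w)
                ((Y p).1, B p ((Y p).1))) ∧
        ξ.2 = B p ξ.1)
    ↔ (∀ (p : (Fin n → ℝ) × (Fin n → ℝ)) (x y z : Fin n → ℝ),
        fderiv ℝ (fun q => flatDot n (B q y) z) p (x, B p x)
          + fderiv ℝ (fun q => flatDot n (B q z) x) p (y, B p y)
          + fderiv ℝ (fun q => flatDot n (B q x) y) p (z, B p z) = 0) := by
  simp only [flatEta_eq_splitMetric, flatDot_eq_dotProductBilin]
  -- `(_ :)` elaborates the term before unifying it with the goal; unifying first times out.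
  exact (stmt16_general (dotProductBilin ℝ ℝ) B
    (fun q => isSkewFor_dotProductBilin (hBskew q)) hB :)
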